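/- Let G be a finitely generated group of polynomial growth with finite symmetric generating set S and word length |·|. Then there exists p with 1 ≤ p < ∞ such that for every orthogonal representation π: G → O(H) on a real Hilbert space H, every 1-cocycle b: G → H for π, and every ξ ∈ H, the function g ↦ (1/|g|)·⟨b(g), ξ⟩ belongs to H^p(G). -/

import Mathlib

/-!
Write `M = K ‖ξ‖` with `K` a bound for `‖b s‖` on `S`. The cocycle identity along a word gives
`‖b g‖ ≤ K |g|`, so `f g = |g|⁻¹ ⟪b g, ξ⟫` is bounded by `M`. As `b (g s) - b g = π g (b s)` has
norm at most `K` and `|g|`, `|g s|` differ by at most one, the quotient rule yields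
`|f g - f (g s)| ≤ 6 M / (|g| + 1)` (`abs_quotient_sub_le`), hence `‖δf(g)‖ ≤ D / (|g| + 1)`.
This tends to `0` since balls are finite (`finite_ball`). Polynomial growth gives
`|B(n)| ≤ A (n + 1) ^ k` for all `n` (`PolynomialGrowth.exists_bound`), so summing over spheres shows
that `(|g| + 1) ^ (-(k + 2))` is summable (`summable_wordLength`): the exponent `p = k + 2` works,
and it depends on the growth of `G` only.
-/

open Filter Topology
open scoped RealInnerProductSpace

noncomputable section

/-- The word length of `g` with respect to a generating set `S`
(`sInf` of lengths of words in `S` representing `g`). -/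
def wordLength {G : Type*} [Group G] (S : Finset G) (g : G) : ℕ :=
  sInf {n | ∃ l : List G, l.length = n ∧ (∀ x ∈ l, x ∈ S) ∧ l.prod = g}

/-- `S` is a finite symmetric generating set. -/
def IsSymmGen {G : Type*} [Group G] (S : Finset G) : Prop :=
  (∀ s ∈ S, s⁻¹ ∈ S) ∧ Subgroup.closure (S : Set G) = ⊤

/-- A Reiter sequence: probability measures `μ n` on `G` with `‖μ n - g ∗ μ n‖₁ → 0`
for every `g ∈ G`. -/
def IsReiterSeq {G : Type*} [Group G] (μ : ℕ → G → ℝ) : Prop :=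
  (∀ n g, 0 ≤ μ n g) ∧ (∀ n, Summable (μ n)) ∧ (∀ n, ∑' g, μ n g = 1) ∧
    ∀ g : G, Tendsto (fun n => ∑' h, |μ n h - μ n (g⁻¹ * h)|) atTop (𝓝 0)

/-- A 1-cocycle for the orthogonal representation `π`. -/
def IsCocycle {G H : Type*} [Group G] [NormedAddCommGroup H] [InnerProductSpace ℝ H]
    (π : G →* (H ≃ₗᵢ[ℝ] H)) (b : G → H) : Prop :=
  ∀ g h : G, b (g * h) = π g (b h) + b g

/-- An orthogonal representation is ergodic if its only invariant vector is `0`. -/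
def IsErgodicRep {G H : Type*} [Group G] [NormedAddCommGroup H] [InnerProductSpace ℝ H]
    (π : G →* (H ≃ₗᵢ[ℝ] H)) : Prop :=
  ∀ ξ : H, (∀ g : G, π g ξ = ξ) → ξ = 0

/-- The euclidean norm of the variation `δf(g) ∈ ℝ^S`, `δf(g)(s) = f(g) - f(gs)`. -/
def delNorm {G : Type*} [Group G] (S : Finset G) (f : G → ℝ) (g : G) : ℝ :=
  Real.sqrt (∑ s ∈ S, (f g - f (g * s)) ^ 2)

/-- A bounded function `f : G → ℝ` is higson if `g ↦ ‖δf(g)‖` tends to `0` as `g` leaves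
finite subsets of `G`. -/
def IsHigson {G : Type*} [Group G] (S : Finset G) (f : G → ℝ) : Prop :=
  (∃ M : ℝ, ∀ g, |f g| ≤ M) ∧ Tendsto (delNorm S f) cofinite (𝓝 0)

/-- `f ∈ H^p(G)`: `f` is a higson function (bounded with `‖δf‖ ∈ C₀(G)`) and
`∑ g, ‖δf(g)‖^p < ∞`. -/
def MemHp {G : Type*} [Group G] (S : Finset G) (p : ℝ) (f : G → ℝ) : Prop :=
  (∃ M : ℝ, ∀ g, |f g| ≤ M) ∧ Tendsto (delNorm S f) cofinite (𝓝 0) ∧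
    Summable fun g => delNorm S f g ^ p

/-- `G` has polynomial growth: `limsup_n log |B(n)| / log n < ∞`. -/
def PolynomialGrowth {G : Type*} [Group G] (S : Finset G) : Prop :=
  ∃ C : ℝ, ∀ᶠ n : ℕ in atTop,
    Real.log ({g : G | wordLength S g ≤ n}.ncard) / Real.log n ≤ C

theorem IsSymmGen.exists_word {G : Type*} [Group G] {S : Finset G} (hS : IsSymmGen S) (g : G) :
    ∃ l : List G, l.length = wordLength S g ∧ (∀ x ∈ l, x ∈ S) ∧ l.prod = g := by
  have hne : {n | ∃ l : List G, l.length = n ∧ (∀ x ∈ l, x ∈ S) ∧ l.prod = g}.Nonempty := by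
    have hg : g ∈ Subgroup.closure (S : Set G) := by rw [hS.2]; trivial
    rw [← Subgroup.mem_toSubmonoid, Subgroup.closure_toSubmonoid] at hg
    obtain ⟨l, hl, hp⟩ := Submonoid.exists_list_of_mem_closure hg
    refine ⟨l.length, l, rfl, fun x hx => ?_, hp⟩
    rcases hl x hx with h | h
    · exact h
    · simpa using hS.1 _ h
  exact Nat.sInf_mem hne

theorem IsSymmGen.wordLength_mul_le {G : Type*} [Group G] {S : Finset G} (hS : IsSymmGen S)
    (g : G) {s : G} (hs : s ∈ S) : wordLength S (g * s) ≤ wordLength S g + 1 := by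
  obtain ⟨l, hl, hlS, hp⟩ := hS.exists_word g
  refine Nat.sInf_le ⟨l ++ [s], by simp [hl], fun x hx => ?_, by simp [hp]⟩
  rcases List.mem_append.1 hx with h | h
  · exact hlS x h
  · rw [List.mem_singleton.1 h]; exact hs

theorem IsSymmGen.wordLength_le_mul {G : Type*} [Group G] {S : Finset G} (hS : IsSymmGen S)
    (g : G) {s : G} (hs : s ∈ S) : wordLength S g ≤ wordLength S (g * s) + 1 := by
  simpa using hS.wordLength_mul_le (g * s) (hS.1 s hs)

theorem finite_ball {G : Type*} [Group G] {S : Finset G} (hS : IsSymmGen S) (n : ℕ) :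
    {g : G | wordLength S g ≤ n}.Finite := by
  refine ((List.finite_length_le S n).image
    (fun l : List S => (l.map Subtype.val).prod)).subset fun g hg => ?_
  obtain ⟨l, hl, hlS, hp⟩ := hS.exists_word g
  lift l to List S using hlS
  exact ⟨l, by simpa [← hl] using hg, hp⟩

/-- The growth condition only concerns large radii and real exponents; here it becomes a bound
with a natural exponent, valid for every radius. -/
theorem PolynomialGrowth.exists_bound {G : Type*} [Group G] {S : Finset G} (hS : IsSymmGen S)
    (hpoly : PolynomialGrowth S) :
    ∃ (A : ℝ) (k : ℕ), 0 ≤ A ∧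
      ∀ n : ℕ, ({g : G | wordLength S g ≤ n}.ncard : ℝ) ≤ A * ((n : ℝ) + 1) ^ k := by
  obtain ⟨C, hC⟩ := hpoly
  obtain ⟨N, hN⟩ := eventually_atTop.1 hC
  refine ⟨1 + {g : G | wordLength S g ≤ N + 2}.ncard, ⌈C⌉₊, by positivity, fun n => ?_⟩
  have h1 : (1 : ℝ) ≤ ((n : ℝ) + 1) ^ ⌈C⌉₊ := one_le_pow₀ (by linarith [n.cast_nonneg (α := ℝ)])
  rcases le_total n (N + 2) with hn | hn
  · have h2 : ({g : G | wordLength S g ≤ n}.ncard : ℝ) ≤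
        {g : G | wordLength S g ≤ N + 2}.ncard := by
      exact_mod_cast Set.ncard_le_ncard (fun g (hg : _ ≤ n) => hg.trans hn) (finite_ball hS _)
    have h3 : (0 : ℝ) ≤ {g : G | wordLength S g ≤ N + 2}.ncard := by positivity
    nlinarith
  · have hn2 : (2 : ℝ) ≤ n := by exact_mod_cast (by omega : 2 ≤ n)
    have hlog : 0 < Real.log n := Real.log_pos (by linarith)
    have h2 := (div_le_iff₀ hlog).1 (hN n (by omega))
    have hpow : ({g : G | wordLength S g ≤ n}.ncard : ℝ) ≤ (n : ℝ) ^ ⌈C⌉₊ := by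
      rcases Nat.eq_zero_or_pos ({g : G | wordLength S g ≤ n}.ncard) with h0 | h0
      · rw [h0]; simp
      · rw [← Real.log_le_log_iff (by exact_mod_cast h0) (by positivity), Real.log_pow]
        exact h2.trans (mul_le_mul_of_nonneg_right (Nat.le_ceil C) hlog.le)
    have h3 : (n : ℝ) ^ ⌈C⌉₊ ≤ ((n : ℝ) + 1) ^ ⌈C⌉₊ := by gcongr; linarith
    have h4 : (0 : ℝ) ≤ {g : G | wordLength S g ≤ N + 2}.ncard := by positivity
    nlinarith

/-- Summing over spheres: the sphere of radius `n` contributes at most `A / (n + 1) ^ 2`. -/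
theorem summable_wordLength {G : Type*} [Group G] {S : Finset G} (hS : IsSymmGen S)
    {A : ℝ} {k : ℕ} (hA : 0 ≤ A)
    (hb : ∀ n : ℕ, ({g : G | wordLength S g ≤ n}.ncard : ℝ) ≤ A * ((n : ℝ) + 1) ^ k) :
    Summable fun g : G => (((wordLength S g : ℝ) + 1) ^ (k + 2))⁻¹ := by
  classical
  have hsum : Summable fun n : ℕ => A * (((n : ℝ) + 1) ^ 2)⁻¹ := by
    have h := (summable_nat_add_iff 1).2 (Real.summable_nat_pow_inv (p := 2).2 (by norm_num))
    refine Summable.mul_left A ?_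
    simpa using h
  refine summable_of_sum_le (c := ∑' n : ℕ, A * (((n : ℝ) + 1) ^ 2)⁻¹)
    (fun g => by positivity) fun u => ?_
  rw [← Finset.sum_fiberwise_of_maps_to (t := u.image (wordLength S)) (g := wordLength S)
    (fun g hg => Finset.mem_image_of_mem _ hg)]
  refine le_trans (Finset.sum_le_sum fun n _ => ?_)
    (hsum.sum_le_tsum (u.image (wordLength S)) fun n _ => by positivity)
  have hcard : (((u.filter fun g => wordLength S g = n).card : ℕ) : ℝ) ≤
      A * ((n : ℝ) + 1) ^ k := by
    refine le_trans ?_ (hb n)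
    rw [← Set.ncard_coe_finset, Nat.cast_le]
    exact Set.ncard_le_ncard (fun g hg => (Finset.mem_filter.1 (Finset.mem_coe.1 hg)).2.le)
      (finite_ball hS n)
  calc ∑ g ∈ u with wordLength S g = n, (((wordLength S g : ℝ) + 1) ^ (k + 2))⁻¹
      = ∑ g ∈ u with wordLength S g = n, (((n : ℝ) + 1) ^ (k + 2))⁻¹ :=
        Finset.sum_congr rfl fun g hg => by rw [(Finset.mem_filter.1 hg).2]
    _ = ((u.filter fun g => wordLength S g = n).card : ℝ) * (((n : ℝ) + 1) ^ (k + 2))⁻¹ := by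
        rw [Finset.sum_const, nsmul_eq_mul]
    _ ≤ A * ((n : ℝ) + 1) ^ k * (((n : ℝ) + 1) ^ (k + 2))⁻¹ := by gcongr
    _ = A * (((n : ℝ) + 1) ^ 2)⁻¹ := by
        have : (n : ℝ) + 1 ≠ 0 := by positivity
        rw [pow_add]
        field_simp

theorem IsCocycle.norm_le {G H : Type*} [Group G] [NormedAddCommGroup H] [InnerProductSpace ℝ H]
    {S : Finset G} (hS : IsSymmGen S) {π : G →* (H ≃ₗᵢ[ℝ] H)} {b : G → H} (hb : IsCocycle π b)
    {K : ℝ} (hK : ∀ s ∈ S, ‖b s‖ ≤ K) (g : G) : ‖b g‖ ≤ K * wordLength S g := by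
  have h1 : b 1 = 0 := by simpa using hb 1 1
  obtain ⟨l, hl, hlS, rfl⟩ := hS.exists_word g
  rw [← hl]
  clear hl
  induction l with
  | nil => simp [h1]
  | cons a l ih =>
    have ih := ih fun x hx => hlS x (List.mem_cons_of_mem _ hx)
    have ha := hK a (hlS a List.mem_cons_self)
    rw [List.prod_cons, hb]
    refine (norm_add_le _ _).trans ?_
    rw [LinearIsometryEquiv.norm_map, List.length_cons]
    push_cast
    linarith

/-- Quotient estimate for `x = ⟪b g, ξ⟫`, `n = |g|` and `y = ⟪b (g s), ξ⟫`, `m = |g s|`; the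
convention `0⁻¹ = 0` is covered. -/
theorem abs_quotient_sub_le {n m : ℕ} {x y M : ℝ} (hM : 0 ≤ M) (hmn : m ≤ n + 1) (hnm : n ≤ m + 1)
    (hx : |x| ≤ M * n) (hy : |y| ≤ M * m) (hxy : |x - y| ≤ M) :
    |(n : ℝ)⁻¹ * x - (m : ℝ)⁻¹ * y| ≤ 6 * M * ((n : ℝ) + 1)⁻¹ := by
  have bd : ∀ (j : ℕ) (z : ℝ), |z| ≤ M * j → |(j : ℝ)⁻¹ * z| ≤ M := by
    intro j z hz
    rcases Nat.eq_zero_or_pos j with rfl | hj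
    · simpa using hM
    · have hj' : (0 : ℝ) < j := by exact_mod_cast hj
      rw [abs_mul, abs_of_pos (inv_pos.2 hj'), inv_mul_le_iff₀ hj']
      linarith
  rw [← div_eq_mul_inv, le_div_iff₀ (by positivity)]
  rcases Nat.eq_zero_or_pos n with rfl | hn
  · have := bd m y hy
    simp only [Nat.cast_zero, inv_zero, zero_mul, zero_sub, abs_neg]
    linarith
  rcases Nat.eq_zero_or_pos m with rfl | hm
  · have h := bd n x hx
    have : n = 1 := by omega
    subst this
    simp only [Nat.cast_zero, inv_zero, zero_mul, sub_zero]
    push_cast at h ⊢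
    linarith
  have hn' : (0 : ℝ) < n := by exact_mod_cast hn
  have hm' : (1 : ℝ) ≤ m := by exact_mod_cast hm
  have hm0 : (0 : ℝ) < m := by linarith
  have hd : |(m : ℝ) - n| ≤ 1 := by
    have h1 : (m : ℝ) ≤ n + 1 := by exact_mod_cast hmn
    have h2 : (n : ℝ) ≤ m + 1 := by exact_mod_cast hnm
    rw [abs_le]; constructor <;> linarith
  have hn3 : (n : ℝ) + 1 ≤ 3 * m := by exact_mod_cast (by omega : n + 1 ≤ 3 * m)
  have e : (n : ℝ)⁻¹ * x - (m : ℝ)⁻¹ * y = (m : ℝ)⁻¹ * ((n : ℝ)⁻¹ * x * (m - n) + (x - y)) := by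
    field_simp
    ring
  have h2 : |(n : ℝ)⁻¹ * x * (m - n) + (x - y)| ≤ 2 * M := by
    refine (abs_add_le _ _).trans ?_
    rw [abs_mul]
    nlinarith [bd n x hx, abs_nonneg ((m : ℝ) - n), abs_nonneg ((n : ℝ)⁻¹ * x)]
  rw [e, abs_mul, abs_of_pos (inv_pos.2 hm0), mul_assoc, inv_mul_le_iff₀ hm0]
  calc _ ≤ 2 * M * (3 * m) := by gcongr
    _ = _ := by ring

theorem delNorm_le {G : Type*} [Group G] {S : Finset G} {f : G → ℝ} {g : G} {c : ℝ}
    (h : ∀ s ∈ S, |f g - f (g * s)| ≤ c) : delNorm S f g ≤ Real.sqrt S.card * c := by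
  rcases S.eq_empty_or_nonempty with rfl | ⟨s, hs⟩
  · simp [delNorm]
  have hc : 0 ≤ c := (abs_nonneg _).trans (h s hs)
  rw [delNorm, ← Real.sqrt_sq hc, ← Real.sqrt_mul (by positivity)]
  refine Real.sqrt_le_sqrt ?_
  calc ∑ s ∈ S, (f g - f (g * s)) ^ 2 ≤ ∑ _s ∈ S, c ^ 2 :=
        Finset.sum_le_sum fun s hs => sq_le_sq.2 ((h s hs).trans (le_abs_self c))
    _ = S.card * c ^ 2 := by rw [Finset.sum_const, nsmul_eq_mul]

/-- **Cocycle coefficients on groups of polynomial growth lie in some `H^p`.** If `G` has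
polynomial growth, then there is `1 ≤ p < ∞` such that for every orthogonal representation
`π` on a real Hilbert space, every 1-cocycle `b` for `π`, and every vector `ξ`, the function
`g ↦ (1/|g|) ⟪b g, ξ⟫` lies in `H^p(G)`. -/
theorem cocycle_coefficient_memHp_of_polynomialGrowth {G : Type*} [Group G] [Countable G]
    (S : Finset G) (hS : IsSymmGen S) (hpoly : PolynomialGrowth S) :
    ∃ p : ℝ, 1 ≤ p ∧
      ∀ (H : Type u) (_ : NormedAddCommGroup H), ∀ (_ : InnerProductSpace ℝ H)
        (_ : CompleteSpace H) (π : G →* (H ≃ₗᵢ[ℝ] H)) (b : G → H), IsCocycle π b →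
        ∀ ξ : H, MemHp S p fun g => (wordLength S g : ℝ)⁻¹ * ⟪b g, ξ⟫ := by
  obtain ⟨A, k, hA, hball⟩ := hpoly.exists_bound hS
  refine ⟨((k + 2 : ℕ) : ℝ), by exact_mod_cast (by omega : 1 ≤ k + 2), ?_⟩
  intro H _ _ _ π b hb ξ
  have hK : ∀ s ∈ S, ‖b s‖ ≤ ∑ t ∈ S, ‖b t‖ := fun s hs =>
    Finset.single_le_sum (f := fun t => ‖b t‖) (fun t _ => norm_nonneg _) hs
  set K := ∑ t ∈ S, ‖b t‖ with hKdef
  have hK0 : 0 ≤ K := Finset.sum_nonneg fun t _ => norm_nonneg _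
  set M := K * ‖ξ‖ with hMdef
  have hM : 0 ≤ M := by positivity
  have hx : ∀ g, |⟪b g, ξ⟫| ≤ M * wordLength S g := fun g => by
    refine (abs_real_inner_le_norm _ _).trans ?_
    calc ‖b g‖ * ‖ξ‖ ≤ K * wordLength S g * ‖ξ‖ := by gcongr; exact hb.norm_le hS hK g
      _ = M * wordLength S g := by rw [hMdef]; ring
  set D := Real.sqrt S.card * (6 * M) with hD
  have hD0 : 0 ≤ D := by positivity
  have hdel : ∀ g, delNorm S (fun g => (wordLength S g : ℝ)⁻¹ * ⟪b g, ξ⟫) g ≤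
      D * ((wordLength S g : ℝ) + 1)⁻¹ := fun g => by
    rw [hD, mul_assoc]
    refine delNorm_le fun s hs => abs_quotient_sub_le hM (hS.wordLength_mul_le g hs)
      (hS.wordLength_le_mul g hs) (hx g) (hx _) ?_
    rw [← inner_sub_left, hb g s]
    refine (abs_real_inner_le_norm _ _).trans ?_
    rw [sub_add_cancel_right, norm_neg, LinearIsometryEquiv.norm_map]
    exact mul_le_mul_of_nonneg_right (hK s hs) (norm_nonneg _)
  have hnn : ∀ g, 0 ≤ delNorm S (fun g => (wordLength S g : ℝ)⁻¹ * ⟪b g, ξ⟫) g :=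
    fun g => Real.sqrt_nonneg _
  refine ⟨⟨M, fun g => ?_⟩, ?_, ?_⟩
  · rcases Nat.eq_zero_or_pos (wordLength S g) with h0 | h0
    · simpa [h0] using hM
    · have h0' : (0 : ℝ) < wordLength S g := by exact_mod_cast h0
      rw [abs_mul, abs_of_pos (inv_pos.2 h0'), inv_mul_le_iff₀ h0', mul_comm]
      exact hx g
  · have hlen : Tendsto (wordLength S) cofinite atTop := by
      refine tendsto_atTop.2 fun n => ?_
      rw [eventually_cofinite]
      exact (finite_ball hS n).subset fun g (hg : ¬ n ≤ _) => (not_le.1 hg).le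
    have hinv : Tendsto (fun g : G => D * ((wordLength S g : ℝ) + 1)⁻¹) cofinite (𝓝 0) := by
      have h := (tendsto_inv_atTop_zero.comp (tendsto_atTop_add_const_right _ (1 : ℝ)
        (tendsto_natCast_atTop_atTop.comp hlen))).const_mul D
      simpa using h
    exact squeeze_zero hnn hdel hinv
  · refine Summable.of_nonneg_of_le (fun g => Real.rpow_nonneg (hnn g) _) (fun g => ?_)
      ((summable_wordLength hS hA hball).mul_left (D ^ (k + 2)))
    rw [Real.rpow_natCast]
    calc _ ≤ (D * ((wordLength S g : ℝ) + 1)⁻¹) ^ (k + 2) := pow_le_pow_left₀ (hnn g) (hdel g) _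
      _ = _ := by rw [mul_pow, inv_pow]
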